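/- arXiv:1911.08154 — 2 statements merged into one kernel-verified Lean document; each statement's English description precedes it below -/
import Mathlib

section
/- Let T be a tree. Then T contains no critical 4-path and no critical copy of the star K_{1,3}; that is, there is no (not necessarily induced) path on 4 vertices all three of whose edges are α₃-critical in T, and no star with three leaves all three of whose edges are α₃-critical in T. -/
open SimpleGraph

/-- `l` is a (not necessarily induced) `k`-path in `G`: a list of `k` pairwise distinct
vertices in which consecutive vertices are adjacent. -/
def IsKPath {V : Type*} (G : SimpleGraph V) (k : ℕ) (l : List V) : Prop :=
  l.length = k ∧ l.Nodup ∧ l.Chain' G.Adj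

/-- A `k`-matching in `G`: a finite set of pairwise vertex-disjoint `k`-paths. -/
def IsKMatching {V : Type*} (G : SimpleGraph V) (k : ℕ) (M : Finset (List V)) : Prop :=
  (∀ l ∈ M, IsKPath G k l) ∧
    (M : Set (List V)).Pairwise fun l₁ l₂ => ∀ v ∈ l₁, v ∉ l₂

/-- The `k`-matching number `μ_k(G)`: the maximum cardinality of a `k`-matching. -/
noncomputable def kMatchNum {V : Type*} (G : SimpleGraph V) (k : ℕ) : ℕ :=
  sSup {n | ∃ M : Finset (List V), IsKMatching G k M ∧ M.card = n}

/-- A maximum `k`-matching: a `k`-matching of cardinality `μ_k(G)`. -/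
def IsMaxKMatching {V : Type*} (G : SimpleGraph V) (k : ℕ) (M : Finset (List V)) : Prop :=
  IsKMatching G k M ∧ M.card = kMatchNum G k

/-- A `k`-independent set: a set of vertices whose induced subgraph contains no `k`-path. -/
def IsKIndepSet {V : Type*} (G : SimpleGraph V) (k : ℕ) (S : Finset V) : Prop :=
  ∀ l : List V, IsKPath G k l → ¬ (∀ v ∈ l, v ∈ S)

/-- The `k`-independence number `α_k(G)`. -/
noncomputable def kIndepNum {V : Type*} (G : SimpleGraph V) (k : ℕ) : ℕ :=
  sSup {n | ∃ S : Finset V, IsKIndepSet G k S ∧ S.card = n}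

/-- A `k`-vertex cover: a set of vertices meeting every `k`-path of `G`. -/
def IsKCover {V : Type*} (G : SimpleGraph V) (k : ℕ) (C : Finset V) : Prop :=
  ∀ l : List V, IsKPath G k l → ∃ v ∈ l, v ∈ C

/-- The `k`-vertex cover number `τ_k(G)`. -/
noncomputable def kCoverNum {V : Type*} (G : SimpleGraph V) (k : ℕ) : ℕ :=
  sInf {n | ∃ C : Finset V, IsKCover G k C ∧ C.card = n}

/-- A dissociation set: a set of vertices inducing a subgraph of maximum degree at most 1,
i.e. every vertex of `S` has at most one neighbour inside `S`. -/
def IsDissocSet {V : Type*} (G : SimpleGraph V) (S : Finset V) : Prop :=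
  ∀ v ∈ S, ∀ u ∈ S, ∀ w ∈ S, G.Adj v u → G.Adj v w → u = w

/-- The dissociation number `α₃(G)`. -/
noncomputable def dissNum {V : Type*} (G : SimpleGraph V) : ℕ :=
  sSup {n | ∃ S : Finset V, IsDissocSet G S ∧ S.card = n}

/-- A maximum dissociation set: a dissociation set of cardinality `α₃(G)`. -/
def IsMaxDissocSet {V : Type*} (G : SimpleGraph V) (S : Finset V) : Prop :=
  IsDissocSet G S ∧ S.card = dissNum G

/-- `uv` is an `α₃`-critical edge of `G`: deleting it increases the dissociation number. -/
def IsAlpha3Critical {V : Type*} (G : SimpleGraph V) (u v : V) : Prop :=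
  G.Adj u v ∧ dissNum G < dissNum (G.deleteEdges {s(u, v)})

/-- `uv` is a `μ₃`-critical edge of `G`: deleting it decreases the `3`-matching number. -/
def IsMu3Critical {V : Type*} (G : SimpleGraph V) (u v : V) : Prop :=
  G.Adj u v ∧ kMatchNum (G.deleteEdges {s(u, v)}) 3 < kMatchNum G 3

/-- An insulated `α₃`-critical edge: an `α₃`-critical edge sharing no end-vertex with any
other `α₃`-critical edge. -/
def IsInsulated {V : Type*} (G : SimpleGraph V) (u v : V) : Prop :=
  IsAlpha3Critical G u v ∧
    ∀ x y : V, IsAlpha3Critical G x y → s(x, y) ≠ s(u, v) →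
      x ≠ u ∧ x ≠ v ∧ y ≠ u ∧ y ≠ v

/-- A flexible vertex: one lying in some but not all maximum dissociation sets. -/
def IsFlexible {V : Type*} (G : SimpleGraph V) (v : V) : Prop :=
  (∃ S : Finset V, IsMaxDissocSet G S ∧ v ∈ S) ∧
    (∃ S : Finset V, IsMaxDissocSet G S ∧ v ∉ S)

/-- The set of static-included vertices: vertices lying in every maximum dissociation set. -/
def staticIncluded {V : Type*} (G : SimpleGraph V) : Set V :=
  {v | ∀ S : Finset V, IsMaxDissocSet G S → v ∈ S}

/-- The set of static-excluded vertices: vertices lying in no maximum dissociation set. -/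
def staticExcluded {V : Type*} (G : SimpleGraph V) : Set V :=
  {v | ∀ S : Finset V, IsMaxDissocSet G S → v ∉ S}

/-- The (unordered) edge `uv` occurs as an edge of the path recorded by the list `l`. -/
def EdgeInList {V : Type*} (l : List V) (u v : V) : Prop :=
  ∃ p ∈ l.zip l.tail, p = (u, v) ∨ p = (v, u)

def IsP3 {V : Type*} [DecidableEq V] (G : SimpleGraph V) (t : Finset V) : Prop :=
  ∃ a b c : V, t = {a, b, c} ∧ a ≠ c ∧ G.Adj b a ∧ G.Adj b c

theorem exists_good {V : Type*} [Fintype V] [DecidableEq V] (T : SimpleGraph V)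
    (hT : T.IsAcyclic) (A : Finset V) :
    ∀ (n : ℕ) (D : Finset V) (c : V), D.card ≤ n → D ⊆ A → c ∈ D → ¬ IsDissocSet T D →
      (∀ x ∈ D, x ≠ c → ∀ y ∈ A, y ∉ D → ¬ T.Adj x y) →
      ∃ (D : Finset V) (c : V), D ⊆ A ∧ c ∈ D ∧ ¬ IsDissocSet T D ∧
        (∀ x ∈ D, x ≠ c → ∀ y ∈ A, y ∉ D → ¬ T.Adj x y) ∧ IsDissocSet T (D.erase c) := by
  classical
  intro n
  induction n with
  | zero =>
    intro D c h0 _ hc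
    have : D = ∅ := by simpa using h0
    simp [this] at hc
  | succ n ih =>
    intro D c hn hDA hc hnd hsep
    by_cases hd : IsDissocSet T (D.erase c)
    · exact ⟨D, c, hDA, hc, hnd, hsep, hd⟩
    unfold IsDissocSet at hd
    push Not at hd
    obtain ⟨v, hv, u, hu, w, hw, hvu, hvw, huw⟩ := hd
    let H : SimpleGraph V :=
      { Adj := fun x y => T.Adj x y ∧ x ∈ D.erase c ∧ y ∈ D.erase c
        symm := ⟨fun x y h => ⟨h.1.symm, h.2.2, h.2.1⟩⟩
        loopless := ⟨fun x h => T.loopless.irrefl x h.1⟩ }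
    let K : Finset V := (D.erase c).filter (fun x => H.Reachable v x)
    have hKD : K ⊆ D.erase c := Finset.filter_subset _ _
    have hvK : v ∈ K := Finset.mem_filter.2 ⟨hv, Reachable.refl _⟩
    have hcl : ∀ x ∈ K, ∀ y ∈ D.erase c, T.Adj x y → y ∈ K := by
      intro x hx y hy hxy
      refine Finset.mem_filter.2 ⟨hy, (Finset.mem_filter.1 hx).2.trans ?_⟩
      exact SimpleGraph.Adj.reachable (G := H) ⟨hxy, hKD hx, hy⟩
    have huniq : ∀ x ∈ K, ∀ y ∈ K, T.Adj x c → T.Adj y c → x = y := by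
      intro x hx y hy hxc hyc
      by_contra hne
      have hb := (isAcyclic_iff_forall_adj_isBridge.1 hT) hxc
      rw [isBridge_iff] at hb
      apply hb
      have h1 : H.Reachable x y :=
        (Finset.mem_filter.1 hx).2.symm.trans (Finset.mem_filter.1 hy).2
      have hle : H ≤ T.deleteEdges {s(x, c)} := by
        intro p q hpq
        have hp := Finset.ne_of_mem_erase hpq.2.1
        have hq := Finset.ne_of_mem_erase hpq.2.2
        rw [deleteEdges_adj]
        refine ⟨hpq.1, ?_⟩
        simp only [Set.mem_singleton_iff, Sym2.eq_iff]
        tauto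
      have h2 : (T.deleteEdges {s(x, c)}).Adj y c := by
        rw [deleteEdges_adj]
        refine ⟨hyc, ?_⟩
        have := hyc.ne
        simp only [Set.mem_singleton_iff, Sym2.eq_iff]
        rintro (h | h)
        · exact hne h.1.symm
        · exact this h.1
      exact (h1.mono hle).trans h2.reachable
    have hKn : K.card ≤ n := by
      have := Finset.card_le_card hKD
      rw [Finset.card_erase_of_mem hc] at this
      omega
    have hKA : K ⊆ A := fun x hx => hDA (Finset.mem_of_mem_erase (hKD hx))
    have hKnd : ¬ IsDissocSet T K := fun h =>
      huw (h v hvK u (hcl v hvK u hu hvu) w (hcl v hvK w hw hvw) hvu hvw)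
    obtain ⟨c', hc', hc'u⟩ : ∃ c' ∈ K, ∀ x ∈ K, x ≠ c' → ¬ T.Adj x c := by
      by_cases h : ∃ c' ∈ K, T.Adj c' c
      · obtain ⟨c', h1, h2⟩ := h
        exact ⟨c', h1, fun x hx hne hxc => hne (huniq x hx c' h1 hxc h2)⟩
      · push Not at h
        exact ⟨v, hvK, fun x hx _ => h x hx⟩
    refine ih K c' hKn hKA hc' hKnd ?_
    intro x hx hxc' y hy hyK hxy
    by_cases hyc : y = c
    · subst hyc
      exact hc'u x hx hxc' hxy
    by_cases hyD : y ∈ D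
    · exact hyK (hcl x hx y (Finset.mem_erase.2 ⟨hyc, hyD⟩) hxy)
    · have := Finset.mem_erase.1 (hKD hx)
      exact hsep x this.2 this.1 y hy hyD hxy

theorem exists_packing {V : Type*} [Fintype V] [DecidableEq V] (T : SimpleGraph V)
    (hT : T.IsAcyclic) :
    ∀ (n : ℕ) (A : Finset V), A.card ≤ n → ∃ S ⊆ A, IsDissocSet T S ∧ ∃ M : Finset (Finset V),
      (∀ t ∈ M, t ⊆ A ∧ IsP3 T t) ∧ (∀ t ∈ M, ∀ t' ∈ M, ∀ x, x ∈ t → x ∈ t' → t = t') ∧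
      A.card ≤ S.card + M.card := by
  intro n
  induction n with
  | zero =>
    intro A h0
    have : A = ∅ := by simpa using h0
    subst this
    exact ⟨∅, by simp, by simp [IsDissocSet], ∅, by simp⟩
  | succ n ih =>
    intro A hA
    by_cases hd : IsDissocSet T A
    · exact ⟨A, subset_rfl, hd, ∅, by simp⟩
    have hne : ∃ c, c ∈ A := by
      by_contra h
      push Not at h
      exact hd (fun v hv => absurd hv (h v))
    obtain ⟨c0, hc0⟩ := hne
    obtain ⟨D, c, hDA, hc, hnd, hsep, hde⟩ := exists_good T hT A A.card A c0 le_rfl subset_rfl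
      hc0 hd (fun x _ _ y hy hy' => absurd hy hy')
    have hcardD : (A \ D).card + D.card = A.card := Finset.card_sdiff_add_card_eq_card hDA
    have hDpos : 0 < D.card := Finset.card_pos.2 ⟨c, hc⟩
    obtain ⟨S, hSA, hS, M, hM, hdisj, hcard⟩ := ih (A \ D) (by omega)
    unfold IsDissocSet at hnd
    push Not at hnd
    obtain ⟨v, hv, u, hu, w, hw, hvu, hvw, huw⟩ := hnd
    have htD : ({u, v, w} : Finset V) ⊆ D := by
      intro x hx
      simp only [Finset.mem_insert, Finset.mem_singleton] at hx
      rcases hx with rfl | rfl | rfl <;> assumption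
    have hnot : ∀ t ∈ M, ∀ x ∈ t, x ∉ D := fun t ht x hx =>
      (Finset.mem_sdiff.1 ((hM t ht).1 hx)).2
    have htM : ({u, v, w} : Finset V) ∉ M := fun h => hnot _ h v (by simp) hv
    have hSD : ∀ x ∈ S, x ∈ A ∧ x ∉ D := fun x hx => Finset.mem_sdiff.1 (hSA hx)
    have hcross : ∀ x ∈ D.erase c, ∀ y ∈ S, ¬ T.Adj x y := fun x hx y hy =>
      hsep x (Finset.mem_of_mem_erase hx) (Finset.ne_of_mem_erase hx) y (hSD y hy).1 (hSD y hy).2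
    refine ⟨S ∪ D.erase c, ?_, ?_, insert {u, v, w} M, ?_, ?_, ?_⟩
    · intro x hx
      rcases Finset.mem_union.1 hx with h | h
      · exact (hSD x h).1
      · exact hDA (Finset.mem_of_mem_erase h)
    · intro a ha b hb d hd' hab had
      rcases Finset.mem_union.1 ha with h | h <;> rcases Finset.mem_union.1 hb with h' | h' <;>
        rcases Finset.mem_union.1 hd' with h'' | h''
      · exact hS a h b h' d h'' hab had
      · exact absurd had.symm (hcross d h'' a h)
      · exact absurd hab.symm (hcross b h' a h)
      · exact absurd hab.symm (hcross b h' a h)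
      · exact absurd hab (hcross a h b h')
      · exact absurd hab (hcross a h b h')
      · exact absurd had (hcross a h d h'')
      · exact hde a h b h' d h'' hab had
    · intro t ht
      rcases Finset.mem_insert.1 ht with rfl | h
      · exact ⟨htD.trans hDA, u, v, w, rfl, huw, hvu, hvw⟩
      · exact ⟨(hM t h).1.trans Finset.sdiff_subset, (hM t h).2⟩
    · intro t ht t' ht' x hx hx'
      rcases Finset.mem_insert.1 ht with rfl | h <;> rcases Finset.mem_insert.1 ht' with rfl | h'
      · rfl
      · exact absurd (htD hx) (hnot t' h' x hx')
      · exact absurd (htD hx') (hnot t h x hx)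
      · exact hdisj t h t' h' x hx hx'
    · rw [Finset.card_insert_of_notMem htM, Finset.card_union_of_disjoint,
        Finset.card_erase_of_mem hc]
      · omega
      · rw [Finset.disjoint_left]
        intro x hx hx'
        exact (hSD x hx).2 (Finset.mem_of_mem_erase hx')

theorem diss_bdd {V : Type*} [Fintype V] (G : SimpleGraph V) :
    BddAbove {n | ∃ S : Finset V, IsDissocSet G S ∧ S.card = n} :=
  ⟨Fintype.card V, by rintro n ⟨S, _, rfl⟩; exact Finset.card_le_univ S⟩

theorem le_dissNum {V : Type*} [Fintype V] (G : SimpleGraph V) (S : Finset V)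
    (h : IsDissocSet G S) : S.card ≤ dissNum G :=
  le_csSup (diss_bdd G) ⟨S, h, rfl⟩

theorem exists_max {V : Type*} [Fintype V] (G : SimpleGraph V) :
    ∃ S : Finset V, IsDissocSet G S ∧ S.card = dissNum G :=
  Nat.sSup_mem (s := {n | ∃ S : Finset V, IsDissocSet G S ∧ S.card = n})
    ⟨0, ∅, by simp [IsDissocSet], by simp⟩ (diss_bdd G)

theorem card_packing {V : Type*} [Fintype V] [DecidableEq V] (G : SimpleGraph V)
    (S : Finset V) (hS : IsDissocSet G S) (M : Finset (Finset V)) (hM : ∀ t ∈ M, IsP3 G t)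
    (hd : ∀ t ∈ M, ∀ t' ∈ M, ∀ x, x ∈ t → x ∈ t' → t = t') :
    S.card + M.card ≤ Fintype.card V := by
  have h : ∀ t : M, ∃ x, x ∈ t.1 ∧ x ∉ S := by
    rintro ⟨t, ht⟩
    by_contra hcon
    push Not at hcon
    obtain ⟨a, b, c, rfl, hac, hba, hbc⟩ := hM t ht
    exact hac (hS b (hcon b (by simp)) a (hcon a (by simp)) c (hcon c (by simp)) hba hbc)
  choose f hf hfS using h
  have hinj : Function.Injective f := by
    intro t t' h
    exact Subtype.ext (hd t.1 t.2 t'.1 t'.2 (f t) (hf t) (h ▸ hf t'))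
  have h1 : (Finset.univ.image f).card = M.card := by
    rw [Finset.card_image_of_injective _ hinj]; simp
  have h2 : Finset.univ.image f ⊆ Sᶜ := by
    intro x hx
    obtain ⟨t, _, rfl⟩ := Finset.mem_image.1 hx
    exact Finset.mem_compl.2 (hfS t)
  have h3 := Finset.card_le_card h2
  have h4 := Finset.card_add_card_compl S
  omega

theorem critical_family {V : Type*} [Fintype V] [DecidableEq V]
    (T : SimpleGraph V) (hT : T.IsAcyclic) : ∃ M : Finset (Finset V),
      (∀ t ∈ M, t.card ≤ 3) ∧ (∀ t ∈ M, ∀ t' ∈ M, ∀ x, x ∈ t → x ∈ t' → t = t') ∧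
      ∀ u v, IsAlpha3Critical T u v → ∃ t ∈ M, u ∈ t ∧ v ∈ t := by
  obtain ⟨S, -, hS, M, hM, hd, hcard⟩ := exists_packing T hT _ Finset.univ le_rfl
  refine ⟨M, ?_, hd, ?_⟩
  · intro t ht
    obtain ⟨a, b, c, rfl, -⟩ := (hM t ht).2
    exact Finset.card_le_three
  · intro u v huv
    by_contra hcon
    push Not at hcon
    obtain ⟨S', hS', hS'c⟩ := exists_max (T.deleteEdges {s(u, v)})
    have key : ∀ t ∈ M, ∀ x y, x ∈ t → y ∈ t → T.Adj x y →
        (T.deleteEdges {s(u, v)}).Adj x y := by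
      intro t ht x y hx hy hxy
      rw [deleteEdges_adj]
      refine ⟨hxy, ?_⟩
      simp only [Set.mem_singleton_iff, Sym2.eq_iff]
      rintro (⟨rfl, rfl⟩ | ⟨rfl, rfl⟩)
      · exact hcon t ht hx hy
      · exact hcon t ht hy hx
    have h1 := card_packing _ S' hS' M (by
      intro t ht
      obtain ⟨a, b, c, h, hac, hba, hbc⟩ := (hM t ht).2
      exact ⟨a, b, c, h, hac, key t ht b a (by simp [h]) (by simp [h]) hba,
        key t ht b c (by simp [h]) (by simp [h]) hbc⟩) hd
    have h2 := le_dissNum T S hS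
    have h3 := huv.2
    rw [Finset.card_univ] at hcard
    omega

theorem card_contra {V : Type*} [DecidableEq V] (t : Finset V) (h : t.card ≤ 3) (a b c d : V)
    (ha : a ∈ t) (hb : b ∈ t) (hc : c ∈ t) (hd : d ∈ t) (hn : [a, b, c, d].Nodup) : False := by
  have h1 : ({a, b, c, d} : Finset V) ⊆ t := by
    intro x hx
    simp only [Finset.mem_insert, Finset.mem_singleton] at hx
    rcases hx with rfl | rfl | rfl | rfl <;> assumption
  have h2 : [a, b, c, d].toFinset.card = 4 := List.toFinset_card_of_nodup hn
  have h3 := Finset.card_le_card h1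
  simp only [List.toFinset_cons, List.toFinset_nil, insert_empty_eq] at h2
  omega

/-- A tree contains no critical `4`-path and no critical copy of the star `K_{1,3}`:
there is no (not necessarily induced) path on `4` vertices all of whose edges are
`α₃`-critical, and no star with three leaves all of whose edges are `α₃`-critical. -/
theorem tree_no_critical_fourPath_no_critical_star {V : Type*} [Fintype V] [DecidableEq V]
    (T : SimpleGraph V) (hT : T.IsTree) :
    (¬ ∃ a b c d : V, IsKPath T 4 [a, b, c, d] ∧
        IsAlpha3Critical T a b ∧ IsAlpha3Critical T b c ∧ IsAlpha3Critical T c d) ∧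
      (¬ ∃ c x y z : V, x ≠ y ∧ x ≠ z ∧ y ≠ z ∧
        IsAlpha3Critical T c x ∧ IsAlpha3Critical T c y ∧ IsAlpha3Critical T c z) := by
  obtain ⟨M, hM3, hd, hcr⟩ := critical_family T hT.2
  constructor
  · rintro ⟨a, b, c, d, hp, hab, hbc, hcd⟩
    obtain ⟨t, ht, h1, h2⟩ := hcr _ _ hab
    obtain ⟨t', ht', h1', h2'⟩ := hcr _ _ hbc
    obtain ⟨t'', ht'', h1'', h2''⟩ := hcr _ _ hcd
    obtain rfl := hd t ht t' ht' b h2 h1'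
    obtain rfl := hd t ht t'' ht'' c h2' h1''
    exact card_contra t (hM3 t ht) a b c d h1 h2 h2' h2'' hp.2.1
  · rintro ⟨c, x, y, z, hxy, hxz, hyz, hx, hy, hz⟩
    obtain ⟨t, ht, h1, h2⟩ := hcr _ _ hx
    obtain ⟨t', ht', h1', h2'⟩ := hcr _ _ hy
    obtain ⟨t'', ht'', h1'', h2''⟩ := hcr _ _ hz
    obtain rfl := hd t ht t' ht' c h1 h1'
    obtain rfl := hd t ht t'' ht'' c h1 h1''
    refine card_contra t (hM3 t ht) c x y z h1 h2 h2' h2'' ?_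
    simp [hx.1.ne, hy.1.ne, hz.1.ne, hxy, hxz, hyz]
end

section
/- Let T be a tree. Then every maximum dissociation set of T contains exactly one end-vertex of each insulated α₃-critical edge of T. -/
open SimpleGraph

section helpers
variable {V : Type*} [Fintype V] [DecidableEq V]

set_option linter.unusedSectionVars false

lemma aux_bdd (G : SimpleGraph V) :
    BddAbove {n | ∃ S : Finset V, IsDissocSet G S ∧ S.card = n} :=
  ⟨Fintype.card V, by rintro n ⟨S, -, rfl⟩; exact Finset.card_le_univ S⟩

lemma aux_le (G : SimpleGraph V) (S : Finset V) (h : IsDissocSet G S) : S.card ≤ dissNum G :=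
  le_csSup (aux_bdd G) ⟨S, h, rfl⟩

lemma aux_ex (G : SimpleGraph V) : ∃ S : Finset V, IsDissocSet G S ∧ S.card = dissNum G :=
  Nat.sSup_mem (s := {n | ∃ S : Finset V, IsDissocSet G S ∧ S.card = n})
    ⟨0, ∅, by simp [IsDissocSet], rfl⟩ (aux_bdd G)

lemma aux_cut (T : SimpleGraph V) (hT : T.IsAcyclic) (u v : V) (h : T.Adj u v) :
    ∃ P : Finset V, u ∈ P ∧ v ∉ P ∧ ∀ a ∈ P, ∀ b, b ∉ P → T.Adj a b → a = u ∧ b = v := by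
  classical
  have hb := (SimpleGraph.isAcyclic_iff_forall_adj_isBridge.1 hT) h
  rw [SimpleGraph.isBridge_iff] at hb
  have hb2 : ¬ (T.deleteEdges {s(u, v)}).Reachable u v := by
    simpa [SimpleGraph.deleteEdges] using hb
  refine ⟨Finset.univ.filter (fun z => (T.deleteEdges {s(u, v)}).Reachable u z), ?_, ?_, ?_⟩
  · simp
  · simpa using hb2
  · intro a ha b hb' hab
    simp only [Finset.mem_filter, Finset.mem_univ, true_and] at ha hb'
    by_cases he : s(a, b) = s(u, v)
    · rw [Sym2.eq_iff] at he
      rcases he with he | ⟨rfl, rfl⟩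
      · exact he
      · exact absurd ha hb2
    · exact absurd (ha.trans (SimpleGraph.Adj.reachable (by
        rw [SimpleGraph.deleteEdges_adj]; exact ⟨hab, by simpa using he⟩))) hb'

lemma aux_card (P S : Finset V) : (S \ P).card + (S ∩ P).card = S.card :=
  Finset.card_sdiff_add_card_inter S P

lemma aux_mix (P S D : Finset V) :
    ((S \ P) ∪ (D ∩ P)).card = (S \ P).card + (D ∩ P).card := by
  apply Finset.card_union_of_disjoint
  rw [Finset.disjoint_left]
  grind +splitImp

lemma aux_del (T : SimpleGraph V) (u v a b : V) :
    (T.deleteEdges {s(u, v)}).Adj a b ↔ T.Adj a b ∧ ¬ (a = u ∧ b = v) ∧ ¬ (a = v ∧ b = u) := by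
  rw [SimpleGraph.deleteEdges_adj]
  simp [not_or]

/-- neither case -/
lemma aux_neither (T : SimpleGraph V) (S : Finset V) (hS : IsMaxDissocSet T S)
    (u v : V) (hu : u ∉ S) (P : Finset V) (huP : u ∈ P) (hvP : v ∉ P)
    (hP : ∀ a ∈ P, ∀ b, b ∉ P → T.Adj a b → a = u ∧ b = v)
    (D : Finset V) (hD : IsDissocSet (T.deleteEdges {s(u, v)}) D)
    (hc : (S \ P).card < (D \ P).card) : False := by
  have h1 : IsDissocSet T ((D \ P) ∪ (S ∩ P)) := by
    clear hc
    intro a ha b hb c hc hab hac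
    have h1 := fun h h' h'' => hD a h b h' c h''
    have h2 := fun h h' h'' => hS.1 a h b h' c h''
    have h3 := hab.symm
    have h4 := hac.symm
    clear hD hS
    have p1 := fun h => hP a h b
    have p2 := fun h => hP b h a
    have p3 := fun h => hP a h c
    have p4 := fun h => hP c h a
    clear hP
    simp only [aux_del] at h1
    simp only [Finset.mem_union, Finset.mem_sdiff, Finset.mem_inter] at ha hb hc
    grind +splitImp
  have := aux_le T _ h1
  have e := aux_mix P D S
  have := aux_card P S
  have := hS.2
  omega

lemma aux_both (T : SimpleGraph V) (hT : T.IsAcyclic) (S : Finset V) (hS : IsMaxDissocSet T S)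
    (u v : V) (huv : T.Adj u v) (hu : u ∈ S) (hv : v ∈ S) (P : Finset V)
    (huP : u ∈ P) (hvP : v ∉ P)
    (hP : ∀ a ∈ P, ∀ b, b ∉ P → T.Adj a b → a = u ∧ b = v)
    (D : Finset V) (hD : IsDissocSet (T.deleteEdges {s(u, v)}) D)
    (hc : (S \ P).card < (D \ P).card) : ∃ x, x ≠ u ∧ IsAlpha3Critical T v x := by
  obtain ⟨E, hE⟩ : ∃ E, E = (D \ P) ∪ (S ∩ P) := ⟨_, rfl⟩
  have hEc : S.card < E.card := by
    have e := aux_mix P D S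
    have := aux_card P S
    rw [hE]; omega
  have huE : u ∈ E := by grind
  have hEd : IsDissocSet (T.deleteEdges {s(u, v)}) E := by
    clear hc hEc
    intro a ha b hb c hc hab hac
    have h1 := fun h h' h'' => hD a h b h' c h''
    have h2 := fun h h' h'' => hS.1 a h b h' c h''
    have h3 := hab.symm
    have h4 := hac.symm
    clear hD hS
    have p1 := fun h => hP a h b
    have p2 := fun h => hP b h a
    have p3 := fun h => hP a h c
    have p4 := fun h => hP c h a
    clear hP
    simp only [aux_del] at h1 hab hac h3 h4
    simp only [hE, Finset.mem_union, Finset.mem_sdiff, Finset.mem_inter] at ha hb hc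
    grind +splitImp
  have huI : ∀ w ∈ E, T.Adj u w → w = v := by
    intro w hw huw
    have h2 := hS.1 u hu v hv
    grind +splitImp
  have hx : ∃ x ∈ E, T.Adj v x ∧ x ≠ u ∧ v ∈ E := by
    by_contra hx
    push Not at hx
    have : IsDissocSet T E := by
      clear hc hEc hE hP hD
      intro a ha b hb c hc hab hac
      have h1 := hEd a ha b hb c hc
      have h3 := hab.symm
      have h4 := hac.symm
      simp only [aux_del] at h1
      grind +splitImp
    have := aux_le T _ this
    have := hS.2
    omega
  obtain ⟨x, hxE, hvx, hxu, hvE⟩ := hx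
  refine ⟨x, hxu, hvx, ?_⟩
  have hxS : x ∉ S := fun h => hxu (hS.1 v hv x h u hu hvx huv.symm)
  have hvI : ∀ w ∈ E, T.Adj v w → w = u ∨ w = x := by
    intro w hw hvw
    have := hEd v hvE w hw x hxE
    simp only [aux_del] at this
    grind +splitImp
  obtain ⟨Q, hvQ, hxQ, hQ⟩ := aux_cut T hT v x hvx
  have h1 : IsDissocSet (T.deleteEdges {s(v, x)}) ((E \ Q) ∪ (S ∩ Q)) := by
    have huQ : u ∈ Q := by
      by_contra h
      exact hxu (hQ v hvQ u h huv.symm).2.symm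
    clear hc hEc hE hP hD huI hvI
    intro a ha b hb c hc hab hac
    have h1 := fun h h' h'' => hEd a h b h' c h''
    have h2 := fun h h' h'' => hS.1 a h b h' c h''
    have h3 := hab.symm
    have h4 := hac.symm
    clear hEd hS
    have p1 := fun h => hQ a h b
    have p2 := fun h => hQ b h a
    have p3 := fun h => hQ a h c
    have p4 := fun h => hQ c h a
    clear hQ
    simp only [aux_del] at h1 hab hac h3 h4
    simp only [Finset.mem_union, Finset.mem_sdiff, Finset.mem_inter] at ha hb hc
    grind +splitImp
  have h2 : IsDissocSet T ((S \ Q) ∪ (E ∩ Q)) := by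
    clear hc hEc hE hP hD h1
    intro a ha b hb c hc hab hac
    have h1 := fun h h' h'' => hEd a h b h' c h''
    have h2 := fun h h' h'' => hS.1 a h b h' c h''
    have h3 := hab.symm
    have h4 := hac.symm
    have q1 := huI b
    have q2 := huI c
    have q3 := hvI b
    have q4 := hvI c
    clear hEd hS huI hvI
    have p1 := fun h => hQ a h b
    have p2 := fun h => hQ b h a
    have p3 := fun h => hQ a h c
    have p4 := fun h => hQ c h a
    clear hQ
    simp only [aux_del] at h1
    simp only [Finset.mem_union, Finset.mem_sdiff, Finset.mem_inter] at ha hb hc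
    grind +splitImp
  have i1 := aux_le _ _ h1
  have i2 := aux_le _ _ h2
  have e1 := aux_mix Q E S
  have e2 := aux_mix Q S E
  have e3 := aux_card Q S
  have e4 := aux_card Q E
  have := hS.2
  omega

end helpers

/-- Every maximum dissociation set of a tree contains exactly one end-vertex of each
insulated `α₃`-critical edge. -/
theorem tree_maxDissoc_exactly_one_endvertex_insulated {V : Type*} [Fintype V]
    [DecidableEq V] (T : SimpleGraph V) (hT : T.IsTree) :
    ∀ S : Finset V, IsMaxDissocSet T S → ∀ u v : V, IsInsulated T u v →
      (u ∈ S ∧ v ∉ S) ∨ (u ∉ S ∧ v ∈ S) := by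
  intro S hS u v ⟨⟨huv, hlt⟩, hins⟩
  obtain ⟨D, hD, hDc⟩ := aux_ex (T.deleteEdges {s(u, v)})
  obtain ⟨P, huP, hvP, hP⟩ := aux_cut T hT.IsAcyclic u v huv
  have hD' : IsDissocSet (T.deleteEdges {s(v, u)}) D := by rw [Sym2.eq_swap]; exact hD
  have hP' : ∀ a ∈ Pᶜ, ∀ b, b ∉ Pᶜ → T.Adj a b → a = v ∧ b = u := by
    intro a ha b hb hab
    have := hP b (by simpa using hb) a (by simpa using ha) hab.symm
    exact ⟨this.2, this.1⟩
  have hc : (S \ P).card < (D \ P).card ∨ (S \ Pᶜ).card < (D \ Pᶜ).card := by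
    have e1 := aux_card P S
    have e2 := aux_card P D
    have e3 : S \ Pᶜ = S ∩ P := by ext; simp
    have e4 : D \ Pᶜ = D ∩ P := by ext; simp
    have := hS.2
    rw [e3, e4]
    omega
  have huP' : u ∉ Pᶜ := by simpa using huP
  have hvP' : v ∈ Pᶜ := by simpa using hvP
  by_cases hu : u ∈ S <;> by_cases hv : v ∈ S
  · exfalso
    rcases hc with hc | hc
    · obtain ⟨x, hx, hcr⟩ := aux_both T hT.IsAcyclic S hS u v huv hu hv P huP hvP hP D hD hc
      exact (hins v x hcr (by rw [Ne, Sym2.eq_iff]; have := huv.ne; grind)).2.1 rfl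
    · obtain ⟨x, hx, hcr⟩ :=
        aux_both T hT.IsAcyclic S hS v u huv.symm hv hu Pᶜ hvP' huP' hP' D hD' hc
      exact (hins u x hcr (by rw [Ne, Sym2.eq_iff]; have := huv.ne; grind)).1 rfl
  · exact Or.inl ⟨hu, hv⟩
  · exact Or.inr ⟨hu, hv⟩
  · exfalso
    rcases hc with hc | hc
    · exact aux_neither T S hS u v hu P huP hvP hP D hD hc
    · exact aux_neither T S hS v u hv Pᶜ hvP' huP' hP' D hD' hc
end
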